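/- There is a universal constant C > 0 such that the following holds. Let X ⊆ ℝ be a nonempty compact interval of diameter D > 0, f : X → ℝ convex and G-Lipschitz with G > 0, f* = min_{x∈X} f, T ≥ 1 an integer, S = {x ∈ X : f(x) − f* ≤ GD/√T}, and η = 4D/(G√T). Let (x_i)_{i≥0} be an SGD process with fixed step size η such that, in addition, for fixed constants 0 < ε ≤ 1 and 0 < c ≤ 1, whenever x_t ∉ S the conditional expectation satisfies |E[ĝ_t | F_t]| ∈ [cεG, εG] almost surely (the nearly linear condition). Then E[f(x_T) − f*] ≤ C·GD/(c·√T). -/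

import Mathlib

open MeasureTheory

/-- Projection onto the interval `[A, B]`. -/
noncomputable def projInterval (A B r : ℝ) : ℝ := max A (min B r)

/-!
Let `R t` be the signed distance of `x t` from the interval spanned by `S`. Comparing `x t` with
points of `S` in the subgradient inequality gives `f (x t) - f* - k ≤ E[g t | ℱ t] * R t`, where `k`
is the level defining `S`. Outside `S` the left-hand side is positive, so the mean step points
towards `S`; near linearity then makes this drift at least `c * ε * G`, and bounds `f (x t) - f*` by
`k + ε * G * |R t|`.

It remains to bound `E |R T|`. For `b = c * ε / 2` and `l = b / (η * G)`, the step of `l * R` has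
size at most `b` and inward drift at least `2 * b ^ 2`. In the expansion of `cosh (l * R)` the drift
beats the quadratic error `b ^ 2`, so `v t = E cosh (l * R t)` satisfies
`v (t + 1) ≤ (1 - b ^ 2) * v t + 2 * b ^ 2`. Since `v 0 ≤ exp ((l * D) ^ 2 / 2)` is forgotten
after `T` steps, `v T ≤ 3`, and `E |R T| ≤ v T / l`.
-/

open Set Filter Topology

/-- `m` is a subgradient at `u` of the restriction of `f` to `s`. -/
def IsSubgradientOn (f : ℝ → ℝ) (s : Set ℝ) (m u : ℝ) : Prop :=
  ∀ y ∈ s, m * (y - u) ≤ f y - f u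

/-- The `k`-approximate minimizers of `f` on `s`; the set `S` of the theorem for
`k = G * D / √T`. -/
def nearMinimizers (f : ℝ → ℝ) (s : Set ℝ) (k : ℝ) : Set ℝ :=
  {u | u ∈ s ∧ f u - sInf (f '' s) ≤ k}

/-- The signed distance of `r` from the interval `[p, q]`: positive to its right, negative to its
left. -/
noncomputable def excess (p q r : ℝ) : ℝ := r - projInterval p q r

/-- The signed distance from the interval spanned by the `k`-approximate minimizers of `f` on
`s`. -/
noncomputable def nearMinExcess (f : ℝ → ℝ) (s : Set ℝ) (k : ℝ) : ℝ → ℝ :=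
  excess (sInf (nearMinimizers f s k)) (sSup (nearMinimizers f s k))

/-- `x` is a run of stochastic gradient descent for `f`, projected onto `[A, B]`, with constant step
size `η` and stochastic subgradients `g` bounded by `G`. The initial point may be random. -/
structure IsProjectedSGD {Ω : Type*} {m0 : MeasurableSpace Ω} (μ : Measure Ω) (ℱ : Filtration ℕ m0)
    (f : ℝ → ℝ) (A B G η : ℝ) (x g : ℕ → Ω → ℝ) : Prop where
  measurable_zero : Measurable[ℱ 0] (x 0)
  zero_mem_Icc : ∀ ω, x 0 ω ∈ Icc A B
  measurable_gradient : ∀ t, Measurable[ℱ (t + 1)] (g t)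
  abs_gradient_le : ∀ t, ∀ᵐ ω ∂μ, |g t ω| ≤ G
  step : ∀ t ω, x (t + 1) ω = projInterval A B (x t ω - η * g t ω)
  isSubgradientOn : ∀ t, ∀ᵐ ω ∂μ, IsSubgradientOn f (Icc A B) ((μ[g t | ℱ t]) ω) (x t ω)

section Projection

variable {A B p q r y : ℝ}

lemma projInterval_mem_Icc (h : A ≤ B) (r : ℝ) : projInterval A B r ∈ Icc A B :=
  ⟨le_max_left _ _, max_le h (min_le_left _ _)⟩

lemma projInterval_of_mem_Icc (h : r ∈ Icc A B) : projInterval A B r = r := by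
  rw [projInterval, min_eq_right h.2, max_eq_right h.1]

lemma continuous_projInterval (A B : ℝ) : Continuous (projInterval A B) := by
  unfold projInterval
  fun_prop

lemma abs_projInterval_sub_le (hy : y ∈ Icc A B) (r : ℝ) :
    |projInterval A B r - y| ≤ |r - y| := by
  obtain ⟨hAy, hyB⟩ := hy
  grind [projInterval]

lemma continuous_excess (p q : ℝ) : Continuous (excess p q) :=
  continuous_id.sub (continuous_projInterval p q)

lemma excess_of_mem_Icc (h : r ∈ Icc p q) : excess p q r = 0 := by
  rw [excess, projInterval_of_mem_Icc h, sub_self]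

lemma abs_excess_le (hy : y ∈ Icc p q) (r : ℝ) : |excess p q r| ≤ |r - y| := by
  obtain ⟨hpy, hyq⟩ := hy
  grind [excess, projInterval]

lemma abs_excess_projInterval_sub_le (hpq : p ≤ q) (hsub : Icc p q ⊆ Icc A B) (r w : ℝ) :
    |excess p q (projInterval A B (r - w))| ≤ |excess p q r - w| := by
  have hmem := projInterval_mem_Icc hpq r
  calc |excess p q (projInterval A B (r - w))|
      ≤ |projInterval A B (r - w) - projInterval p q r| := abs_excess_le hmem _
    _ ≤ |r - w - projInterval p q r| := abs_projInterval_sub_le (hsub hmem) _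
    _ = |excess p q r - w| := by rw [excess, sub_right_comm]

end Projection

section Subgradient

variable {f : ℝ → ℝ} {s S : Set ℝ} {m u v k : ℝ}

lemma IsSubgradientOn.bddBelow_image (h : IsSubgradientOn f s m u) (hs : Bornology.IsBounded s) :
    BddBelow (f '' s) := by
  have hcont : ContinuousOn (fun y => f u + m * (y - u)) (closure s) := by fun_prop
  obtain ⟨a, ha⟩ := hs.isCompact_closure.bddBelow_image hcont
  refine ⟨a, forall_mem_image.2 fun y hy => ?_⟩
  have hay : a ≤ f u + m * (y - u) := ha (mem_image_of_mem _ (subset_closure hy))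
  linarith [h y hy]

lemma IsSubgradientOn.sub_le_mul_sub (h : IsSubgradientOn f s m u) (hSs : S ⊆ s)
    (hS : S.Nonempty) (hbelow : BddBelow S) (habove : BddAbove S) (hv : ∀ y ∈ S, f y ≤ v)
    {y : ℝ} (hy : y ∈ Icc (sInf S) (sSup S)) : f u - v ≤ m * (u - y) := by
  -- The admissible `y` form a closed half-line, so it suffices to check the points of `S`.
  set H : Set ℝ := {y | f u - v ≤ m * (u - y)} with hH
  have hclosed : IsClosed H := isClosed_le continuous_const (by fun_prop)
  have hord : OrdConnected H := by
    refine ⟨fun a ha b hb z hz => ?_⟩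
    simp only [hH, mem_ofPred_eq] at ha hb ⊢
    rcases le_total 0 m with hm | hm
    · nlinarith [hz.2]
    · nlinarith [hz.1]
  have hSH : closure S ⊆ H := by
    refine closure_minimal (fun y hy => ?_) hclosed
    have := h y (hSs hy)
    have := hv y hy
    simp only [hH, mem_ofPred_eq]
    linarith
  exact hord.out (hSH (csInf_mem_closure hS hbelow)) (hSH (csSup_mem_closure hS habove)) hy

lemma nearMinimizers_subset : nearMinimizers f s k ⊆ s := fun _ hy => hy.1

lemma nearMinimizers_nonempty (hs : s.Nonempty) (hk : 0 < k) : (nearMinimizers f s k).Nonempty := by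
  obtain ⟨_, ⟨y, hy, rfl⟩, hlt⟩ := exists_lt_of_csInf_lt (hs.image f) (lt_add_of_pos_right _ hk)
  exact ⟨y, hy, (sub_left_lt_of_lt_add hlt).le⟩

lemma nearMinExcess_of_mem (hs : Bornology.IsBounded s) (hu : u ∈ nearMinimizers f s k) :
    nearMinExcess f s k u = 0 := by
  have hbdd := hs.subset (nearMinimizers_subset (f := f) (k := k))
  exact excess_of_mem_Icc ⟨csInf_le hbdd.bddBelow hu, le_csSup hbdd.bddAbove hu⟩

lemma IsSubgradientOn.sub_sub_le_mul_nearMinExcess (h : IsSubgradientOn f s m u)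
    (hs : Bornology.IsBounded s) (hne : s.Nonempty) (hk : 0 < k) :
    f u - sInf (f '' s) - k ≤ m * nearMinExcess f s k u := by
  have hbdd := hs.subset (nearMinimizers_subset (f := f) (k := k))
  have hS : (nearMinimizers f s k).Nonempty := nearMinimizers_nonempty hne hk
  have hpq := csInf_le_csSup hS hbdd.bddBelow hbdd.bddAbove
  have hv : ∀ y ∈ nearMinimizers f s k, f y ≤ sInf (f '' s) + k := fun y hy =>
    sub_le_iff_le_add'.1 hy.2
  have hle := h.sub_le_mul_sub nearMinimizers_subset hS hbdd.bddBelow hbdd.bddAbove hv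
    (projInterval_mem_Icc hpq u)
  rwa [← sub_sub] at hle

lemma IsSubgradientOn.mul_abs_nearMinExcess_le {lo : ℝ} (h : IsSubgradientOn f s m u)
    (hs : Bornology.IsBounded s) (hu : u ∈ s) (hk : 0 < k)
    (hlo : u ∉ nearMinimizers f s k → lo ≤ |m|) :
    lo * |nearMinExcess f s k u| ≤ m * nearMinExcess f s k u := by
  by_cases hmem : u ∈ nearMinimizers f s k
  · simp [nearMinExcess_of_mem hs hmem]
  · have hgap : k < f u - sInf (f '' s) := not_le.1 fun hle => hmem ⟨hu, hle⟩
    have hpos : 0 < m * nearMinExcess f s k u :=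
      (sub_pos.2 hgap).trans_le (h.sub_sub_le_mul_nearMinExcess hs ⟨u, hu⟩ hk)
    calc lo * |nearMinExcess f s k u| ≤ |m| * |nearMinExcess f s k u| := by
          gcongr
          exact hlo hmem
      _ = m * nearMinExcess f s k u := by rw [← abs_mul, abs_of_pos hpos]

lemma IsSubgradientOn.sub_sInf_le {hi : ℝ} (h : IsSubgradientOn f s m u)
    (hs : Bornology.IsBounded s) (hne : s.Nonempty) (hk : 0 < k)
    (hhi : u ∉ nearMinimizers f s k → |m| ≤ hi) :
    f u - sInf (f '' s) ≤ k + hi * |nearMinExcess f s k u| := by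
  by_cases hmem : u ∈ nearMinimizers f s k
  · simpa [nearMinExcess_of_mem hs hmem] using hmem.2
  · refine sub_le_iff_le_add'.1 ?_
    calc f u - sInf (f '' s) - k ≤ m * nearMinExcess f s k u :=
          h.sub_sub_le_mul_nearMinExcess hs hne hk
      _ ≤ |m| * |nearMinExcess f s k u| := (le_abs_self _).trans (abs_mul _ _).le
      _ ≤ hi * |nearMinExcess f s k u| := by
          gcongr
          exact hhi hmem

lemma nearMinimizers_span_subset {A B : ℝ} (hAB : A ≤ B) (hk : 0 < k) :
    sInf (nearMinimizers f (Icc A B) k) ≤ sSup (nearMinimizers f (Icc A B) k) ∧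
      Icc (sInf (nearMinimizers f (Icc A B) k)) (sSup (nearMinimizers f (Icc A B) k)) ⊆
        Icc A B := by
  have hS := nearMinimizers_nonempty (f := f) (nonempty_Icc.2 hAB) hk
  have hsub := nearMinimizers_subset (f := f) (s := Icc A B) (k := k)
  exact ⟨csInf_le_csSup hS (bddBelow_Icc.mono hsub) (bddAbove_Icc.mono hsub),
    Icc_subset_Icc (le_csInf hS fun _ hy => (hsub hy).1) (csSup_le hS fun _ hy => (hsub hy).2)⟩

lemma abs_nearMinExcess_le {A B : ℝ} (hu : u ∈ Icc A B) (hk : 0 < k) :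
    |nearMinExcess f (Icc A B) k u| ≤ B - A := by
  obtain ⟨hpq, hsub⟩ := nearMinimizers_span_subset (f := f) (hu.1.trans hu.2) hk
  exact (abs_excess_le (left_mem_Icc.2 hpq) u).trans
    (abs_sub_le_of_le_of_le hu.1 hu.2 (hsub (left_mem_Icc.2 hpq)).1 (hsub (left_mem_Icc.2 hpq)).2)

lemma lowerSemicontinuousOn_of_isSubgradientOn
    (h : ∀ u ∈ S, ∃ m, IsSubgradientOn f S m u) : LowerSemicontinuousOn f S := by
  intro u hu a ha
  obtain ⟨m, hm⟩ := h u hu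
  have hcont : Tendsto (fun y => f u + m * (y - u)) (𝓝[S] u) (𝓝 (f u)) := by
    have : ContinuousAt (fun y => f u + m * (y - u)) u := by fun_prop
    simpa [ContinuousAt] using this.tendsto.mono_left nhdsWithin_le_nhds
  filter_upwards [hcont.eventually_const_lt ha, self_mem_nhdsWithin] with y hay hy
  linarith [hm y hy]

lemma aemeasurable_comp_of_isSubgradientOn {Ω : Type*} {m0 : MeasurableSpace Ω} {μ : Measure Ω}
    {x : Ω → ℝ} (hx : Measurable x) (hmem : ∀ ω, x ω ∈ s)
    (h : ∀ᵐ ω ∂μ, ∃ m, IsSubgradientOn f s m (x ω)) : AEMeasurable (fun ω => f (x ω)) μ := by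
  obtain ⟨t, ht, htm, hsub⟩ := h.exists_measurable_mem
  have hlsc : LowerSemicontinuousOn f (x '' t) := by
    refine lowerSemicontinuousOn_of_isSubgradientOn (forall_mem_image.2 fun ω hω => ?_)
    obtain ⟨m, hm⟩ := hsub ω hω
    exact ⟨m, forall_mem_image.2 fun ω' _ => hm _ (hmem ω')⟩
  have hrestrict : Measurable ((x '' t).domRestrict f) :=
    (lowerSemicontinuous_restrict_iff.2 hlsc).measurable
  have hcomp : Measurable fun ω : t => f (x ω) :=
    hrestrict.comp ((hx.comp measurable_subtype_coe).subtype_mk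
      (h := fun ω : t => mem_image_of_mem x ω.2))
  rw [← Measure.restrict_eq_self_of_ae_mem ht]
  exact aemeasurable_restrict_of_measurable_subtype htm hcomp

end Subgradient

section Hyperbolic

open Real

lemma cosh_sub_le {w : ℝ} (hw : |w| ≤ 1) (u : ℝ) :
    cosh (u - w) ≤ (1 + w ^ 2) * cosh u - w * sinh u := by
  have hexp : exp w ≤ 1 + w + w ^ 2 := by
    linarith [(abs_le.1 (abs_exp_sub_one_sub_id_le hw)).2]
  have hexp_neg : exp (-w) ≤ 1 - w + w ^ 2 := by
    linarith [(abs_le.1 (abs_exp_sub_one_sub_id_le ((abs_neg w).trans_le hw))).2]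
  calc cosh (u - w) = (exp u * exp (-w) + exp (-u) * exp w) / 2 := by
        rw [cosh_eq, ← exp_add, ← exp_add]
        ring_nf
    _ ≤ (exp u * (1 - w + w ^ 2) + exp (-u) * (1 + w + w ^ 2)) / 2 := by gcongr
    _ = (1 + w ^ 2) * cosh u - w * sinh u := by
        rw [cosh_eq, sinh_eq]
        ring

lemma cosh_sub_one_le_abs_sinh (u : ℝ) : cosh u - 1 ≤ |sinh u| := by
  rw [← cosh_abs, abs_sinh, sub_le_comm, cosh_sub_sinh]
  simp

lemma abs_le_cosh (u : ℝ) : |u| ≤ cosh u := by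
  rw [← cosh_abs]
  exact (self_le_sinh_iff.2 (abs_nonneg u)).trans (sinh_lt_cosh _).le

lemma abs_sinh_le_cosh (u : ℝ) : |sinh u| ≤ cosh u := by
  rw [abs_sinh, ← cosh_abs]
  exact (sinh_lt_cosh _).le

lemma mul_abs_sinh_le {a m u : ℝ} (h : a * |u| ≤ m * u) : a * |sinh u| ≤ m * sinh u := by
  rcases lt_trichotomy u 0 with hu | rfl | hu
  · have hsinh := sinh_neg_iff.2 hu
    rw [abs_of_neg hu, mul_neg, ← neg_mul, mul_le_mul_right_of_neg hu] at h
    rwa [abs_of_neg hsinh, mul_neg, ← neg_mul, mul_le_mul_right_of_neg hsinh]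
  · simp
  · have hsinh := sinh_pos_iff.2 hu
    rw [abs_of_pos hu, mul_le_mul_iff_left₀ hu] at h
    rwa [abs_of_pos hsinh, mul_le_mul_iff_left₀ hsinh]

lemma one_sub_sq_pow_mul_cosh_le_one {b L : ℝ} {n : ℕ} (hb : b ^ 2 ≤ 1)
    (hL : L ^ 2 ≤ 2 * n * b ^ 2) : (1 - b ^ 2) ^ n * cosh L ≤ 1 := by
  calc (1 - b ^ 2) ^ n * cosh L ≤ exp (-b ^ 2) ^ n * exp (L ^ 2 / 2) := by
        gcongr
        · exact one_sub_le_exp_neg _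
        · exact cosh_le_exp_half_sq L
    _ = exp (n * -b ^ 2 + L ^ 2 / 2) := by rw [← exp_nat_mul, ← exp_add]
    _ ≤ 1 := exp_le_one_iff.2 (by linarith)

end Hyperbolic

section Lyapunov

open Real

variable {Ω : Type*} {m m0 : MeasurableSpace Ω} {μ : Measure Ω}

lemma integrable_cosh_of_abs_le [IsFiniteMeasure μ] {u : Ω → ℝ} {L : ℝ} (hu : AEMeasurable u μ)
    (hL : ∀ᵐ ω ∂μ, |u ω| ≤ L) : Integrable (fun ω => cosh (u ω)) μ := by
  refine .of_bound (measurable_cosh.comp_aemeasurable hu).aestronglyMeasurable (cosh L) ?_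
  filter_upwards [hL] with ω hω
  rw [norm_of_nonneg (cosh_pos _).le]
  exact cosh_le_cosh.2 (hω.trans (le_abs_self L))

lemma integral_condExp_mul [IsFiniteMeasure μ] (hm : m ≤ m0) {w s : Ω → ℝ} {K : ℝ}
    (hw : Integrable w μ) (hs : StronglyMeasurable[m] s) (hK : ∀ᵐ ω ∂μ, ‖s ω‖ ≤ K) :
    ∫ ω, (μ[w | m]) ω * s ω ∂μ = ∫ ω, w ω * s ω ∂μ := by
  have hws : Integrable (w * s) μ := hw.mul_bdd (hs.mono hm).aestronglyMeasurable hK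
  rw [← integral_condExp hm (f := fun ω => w ω * s ω)]
  exact integral_congr_ae (condExp_mul_of_stronglyMeasurable_right hs hws hw).symm

lemma integral_cosh_le_of_drift [IsProbabilityMeasure μ] (hm : m ≤ m0) {u u' w : Ω → ℝ}
    {a b L : ℝ} (hu : Measurable[m] u) (hL : ∀ᵐ ω ∂μ, |u ω| ≤ L) (hw : AEMeasurable w μ)
    (hb : b ≤ 1) (hwb : ∀ᵐ ω ∂μ, |w ω| ≤ b) (hstep : ∀ᵐ ω ∂μ, |u' ω| ≤ |u ω - w ω|)
    (ha : 0 ≤ a) (hdrift : ∀ᵐ ω ∂μ, a * |u ω| ≤ (μ[w | m]) ω * u ω) :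
    ∫ ω, cosh (u' ω) ∂μ ≤ (1 + b ^ 2 - a) * ∫ ω, cosh (u ω) ∂μ + a := by
  have hcosh : Integrable (fun ω => cosh (u ω)) μ :=
    integrable_cosh_of_abs_le (hu.mono hm le_rfl).aemeasurable hL
  have hsinh : StronglyMeasurable[m] fun ω => sinh (u ω) :=
    (measurable_sinh.comp hu).stronglyMeasurable
  have hsinh_le : ∀ᵐ ω ∂μ, ‖sinh (u ω)‖ ≤ cosh L := by
    filter_upwards [hL] with ω hω
    exact (abs_sinh_le_cosh _).trans (cosh_le_cosh.2 (hω.trans (le_abs_self L)))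
  have hsinh' := (hsinh.mono hm).aestronglyMeasurable (μ := μ)
  have hw_int : Integrable w μ := .of_bound hw.aestronglyMeasurable b hwb
  have hwsinh : Integrable (fun ω => w ω * sinh (u ω)) μ := hw_int.mul_bdd hsinh' hsinh_le
  have hexpand : ∫ ω, cosh (u' ω) ∂μ ≤
      ∫ ω, ((1 + b ^ 2) * cosh (u ω) - w ω * sinh (u ω)) ∂μ := by
    refine integral_mono_of_nonneg (ae_of_all _ fun ω => (cosh_pos _).le)
      ((hcosh.const_mul _).sub hwsinh) ?_
    filter_upwards [hwb, hstep] with ω hω hstepω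
    have hsq : w ω ^ 2 ≤ b ^ 2 := sq_le_sq.2 (hω.trans (le_abs_self b))
    calc cosh (u' ω) ≤ cosh (u ω - w ω) := cosh_le_cosh.2 hstepω
      _ ≤ (1 + w ω ^ 2) * cosh (u ω) - w ω * sinh (u ω) := cosh_sub_le (hω.trans hb) _
      _ ≤ (1 + b ^ 2) * cosh (u ω) - w ω * sinh (u ω) := by
          gcongr
  have hinward : ∫ ω, a * (cosh (u ω) - 1) ∂μ ≤ ∫ ω, w ω * sinh (u ω) ∂μ := by
    rw [← integral_condExp_mul hm hw_int hsinh hsinh_le]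
    refine integral_mono_ae ((hcosh.sub (integrable_const 1)).const_mul a)
      (integrable_condExp.mul_bdd hsinh' hsinh_le) ?_
    filter_upwards [hdrift] with ω hω
    exact (mul_le_mul_of_nonneg_left (cosh_sub_one_le_abs_sinh _) ha).trans (mul_abs_sinh_le hω)
  rw [integral_sub (hcosh.const_mul _) hwsinh, integral_const_mul] at hexpand
  rw [integral_const_mul, integral_sub hcosh (integrable_const 1)] at hinward
  simp only [integral_const, probReal_univ, smul_eq_mul, mul_one] at hinward
  linarith

lemma integral_cosh_le_pow_mul_add_two [IsProbabilityMeasure μ] {ℱ : Filtration ℕ m0}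
    {u w : ℕ → Ω → ℝ} {b L : ℝ} (hu : ∀ t, Measurable[ℱ t] (u t))
    (hL : ∀ t, ∀ᵐ ω ∂μ, |u t ω| ≤ L) (hw : ∀ t, AEMeasurable (w t) μ) (hb : b ^ 2 ≤ 1)
    (hwb : ∀ t, ∀ᵐ ω ∂μ, |w t ω| ≤ b)
    (hstep : ∀ t, ∀ᵐ ω ∂μ, |u (t + 1) ω| ≤ |u t ω - w t ω|)
    (hdrift : ∀ t, ∀ᵐ ω ∂μ, 2 * b ^ 2 * |u t ω| ≤ (μ[w t | ℱ t]) ω * u t ω) (t : ℕ) :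
    ∫ ω, cosh (u t ω) ∂μ ≤ (1 - b ^ 2) ^ t * cosh L + 2 := by
  induction t with
  | zero =>
    have hbound : ∫ ω, cosh (u 0 ω) ∂μ ≤ ∫ _, cosh L ∂μ := by
      refine integral_mono_of_nonneg (ae_of_all _ fun ω => (cosh_pos _).le) (integrable_const _) ?_
      filter_upwards [hL 0] with ω hω
      exact cosh_le_cosh.2 (hω.trans (le_abs_self L))
    simp only [integral_const, probReal_univ, smul_eq_mul, one_mul] at hbound
    linarith
  | succ t ih =>
    calc ∫ ω, cosh (u (t + 1) ω) ∂μ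
        ≤ (1 + b ^ 2 - 2 * b ^ 2) * ∫ ω, cosh (u t ω) ∂μ + 2 * b ^ 2 :=
          integral_cosh_le_of_drift (ℱ.le t) (hu t) (hL t) (hw t)
            ((le_abs_self b).trans ((sq_le_one_iff_abs_le_one b).1 hb)) (hwb t) (hstep t)
            (by positivity) (hdrift t)
      _ = (1 - b ^ 2) * ∫ ω, cosh (u t ω) ∂μ + 2 * b ^ 2 := by ring
      _ ≤ (1 - b ^ 2) * ((1 - b ^ 2) ^ t * cosh L + 2) + 2 * b ^ 2 := by
          gcongr
      _ = (1 - b ^ 2) ^ (t + 1) * cosh L + 2 := by ring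

lemma drift_const_mul {R w : Ω → ℝ} {a l c : ℝ} (hl : 0 ≤ l) (hc : 0 ≤ c)
    (hdrift : ∀ᵐ ω ∂μ, a * |R ω| ≤ (μ[w | m]) ω * R ω) :
    ∀ᵐ ω ∂μ, c * a * |l * R ω| ≤ (μ[c • w | m]) ω * (l * R ω) := by
  filter_upwards [hdrift, condExp_smul c w m] with ω hω hsmul
  calc c * a * |l * R ω| = c * l * (a * |R ω|) := by
        rw [abs_mul, abs_of_nonneg hl]
        ring
    _ ≤ c * l * ((μ[w | m]) ω * R ω) := by gcongr
    _ = (μ[c • w | m]) ω * (l * R ω) := by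
        rw [hsmul, Pi.smul_apply, smul_eq_mul]
        ring

variable [IsProbabilityMeasure μ] {ℱ : Filtration ℕ m0} {R g : ℕ → Ω → ℝ} {D G η a : ℝ} {T : ℕ}

lemma integral_cosh_const_mul_le {l : ℝ} (hR : ∀ t, Measurable[ℱ t] (R t))
    (hD : ∀ t, ∀ᵐ ω ∂μ, |R t ω| ≤ D) (hg : ∀ t, AEMeasurable (g t) μ)
    (hG : ∀ t, ∀ᵐ ω ∂μ, |g t ω| ≤ G) (hη : 0 ≤ η)
    (hstep : ∀ t, ∀ᵐ ω ∂μ, |R (t + 1) ω| ≤ |R t ω - η * g t ω|) (hl : 0 ≤ l)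
    (hlG : (l * η * G) ^ 2 ≤ 1)
    (hdrift : ∀ t, ∀ᵐ ω ∂μ, 2 * l * η * G ^ 2 * |R t ω| ≤ (μ[g t | ℱ t]) ω * R t ω) (t : ℕ) :
    ∫ ω, cosh (l * R t ω) ∂μ ≤ (1 - (l * η * G) ^ 2) ^ t * cosh (l * D) + 2 := by
  refine integral_cosh_le_pow_mul_add_two (w := fun t => (l * η) • g t)
    (fun t => (hR t).const_mul l) (fun t => ?_) (fun t => (hg t).const_smul (l * η)) hlG
    (fun t => ?_) (fun t => ?_) (fun t => ?_) t
  · filter_upwards [hD t] with ω hω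
    rw [abs_mul, abs_of_nonneg hl]
    gcongr
  · filter_upwards [hG t] with ω hω
    rw [Pi.smul_apply, smul_eq_mul, abs_mul, abs_of_nonneg (mul_nonneg hl hη)]
    gcongr
  · filter_upwards [hstep t] with ω hω
    rw [Pi.smul_apply, smul_eq_mul, mul_assoc, ← mul_sub, abs_mul, abs_mul]
    gcongr
  · have hbalance : 2 * (l * η * G) ^ 2 = l * η * (2 * l * η * G ^ 2) := by ring
    rw [hbalance]
    exact drift_const_mul hl (mul_nonneg hl hη) (hdrift t)

lemma integral_cosh_le_three_of_drift (hR : ∀ t, Measurable[ℱ t] (R t))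
    (hD : ∀ t, ∀ᵐ ω ∂μ, |R t ω| ≤ D) (hg : ∀ t, AEMeasurable (g t) μ)
    (hG : ∀ t, ∀ᵐ ω ∂μ, |g t ω| ≤ G) (hη : 0 < η)
    (hstep : ∀ t, ∀ᵐ ω ∂μ, |R (t + 1) ω| ≤ |R t ω - η * g t ω|) (ha : 0 < a) (haG : a ≤ G)
    (hdrift : ∀ t, ∀ᵐ ω ∂μ, a * |R t ω| ≤ (μ[g t | ℱ t]) ω * R t ω)
    (hT : D ^ 2 ≤ 2 * T * (η * G) ^ 2) :
    ∫ ω, cosh (a / (2 * η * G ^ 2) * R T ω) ∂μ ≤ 3 := by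
  have hG_pos : 0 < G := ha.trans_le haG
  obtain ⟨l, hl⟩ : ∃ l, l = a / (2 * η * G ^ 2) := ⟨_, rfl⟩
  have hl_pos : 0 < l := hl ▸ by positivity
  have hla : a = 2 * l * η * G ^ 2 := by
    rw [hl]
    field_simp
  have hsq : (l * η * G) ^ 2 ≤ 1 := by
    refine pow_le_one₀ (by positivity) ?_
    have hlG : 2 * (l * η * G) ≤ 1 := by
      refine le_of_mul_le_mul_right ?_ hG_pos
      linarith
    linarith [show 0 < l * η * G by positivity]
  have hinit : (l * D) ^ 2 ≤ 2 * T * (l * η * G) ^ 2 :=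
    calc (l * D) ^ 2 = l ^ 2 * D ^ 2 := mul_pow _ _ _
      _ ≤ l ^ 2 * (2 * T * (η * G) ^ 2) := by gcongr
      _ = 2 * T * (l * η * G) ^ 2 := by ring
  rw [← hl]
  have hdecay := integral_cosh_const_mul_le hR hD hg hG hη.le hstep hl_pos.le hsq
    (by simpa only [← hla] using hdrift) T
  linarith [one_sub_sq_pow_mul_cosh_le_one hsq hinit]

lemma integral_abs_le_of_drift (hR : ∀ t, Measurable[ℱ t] (R t))
    (hD : ∀ t, ∀ᵐ ω ∂μ, |R t ω| ≤ D) (hg : ∀ t, AEMeasurable (g t) μ)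
    (hG : ∀ t, ∀ᵐ ω ∂μ, |g t ω| ≤ G) (hη : 0 < η)
    (hstep : ∀ t, ∀ᵐ ω ∂μ, |R (t + 1) ω| ≤ |R t ω - η * g t ω|) (ha : 0 < a) (haG : a ≤ G)
    (hdrift : ∀ t, ∀ᵐ ω ∂μ, a * |R t ω| ≤ (μ[g t | ℱ t]) ω * R t ω)
    (hT : D ^ 2 ≤ 2 * T * (η * G) ^ 2) :
    ∫ ω, |R T ω| ∂μ ≤ 6 * η * G ^ 2 / a := by
  have hG_pos : 0 < G := ha.trans_le haG
  set l : ℝ := a / (2 * η * G ^ 2) with hl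
  have hl_pos : 0 < l := by positivity
  have hcosh : Integrable (fun ω => cosh (l * R T ω)) μ :=
    integrable_cosh_of_abs_le (L := l * D)
      (((hR T).mono (ℱ.le T) le_rfl).const_mul l).aemeasurable
      ((hD T).mono fun ω hω => by
        rw [abs_mul, abs_of_pos hl_pos]
        gcongr)
  calc ∫ ω, |R T ω| ∂μ ≤ ∫ ω, cosh (l * R T ω) / l ∂μ := by
        refine integral_mono_of_nonneg (ae_of_all _ fun ω => abs_nonneg _) (hcosh.div_const l)
          (ae_of_all _ fun ω => (le_div_iff₀' hl_pos).2 ?_)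
        simpa only [abs_mul, abs_of_pos hl_pos] using abs_le_cosh (l * R T ω)
    _ = (∫ ω, cosh (l * R T ω) ∂μ) / l := integral_div _ _
    _ ≤ 3 / l := by
        gcongr
        exact integral_cosh_le_three_of_drift hR hD hg hG hη hstep ha haG hdrift hT
    _ = 6 * η * G ^ 2 / a := by
        rw [hl]
        field_simp
        norm_num

end Lyapunov

section StepSize

variable {D G s : ℝ}

lemma sq_le_two_mul_sq_mul_sq (hG : 0 < G) (hs : 0 < s) :
    D ^ 2 ≤ 2 * s ^ 2 * (4 * D / (G * s) * G) ^ 2 := by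
  have hcancel : s * (4 * D / (G * s) * G) = 4 * D := by field_simp
  rw [mul_assoc, ← mul_pow, hcancel]
  linarith [mul_pow 4 D 2, sq_nonneg D]

lemma level_add_drift_le {c ε : ℝ} (hD : 0 < D) (hG : 0 < G) (hs : 0 < s) (hε : 0 < ε)
    (hc : 0 < c) (hc1 : c ≤ 1) :
    G * D / s + ε * G * (6 * (4 * D / (G * s)) * G ^ 2 / (c * ε * G)) ≤ 25 * G * D / (c * s) :=
  calc G * D / s + ε * G * (6 * (4 * D / (G * s)) * G ^ 2 / (c * ε * G))
      = (c + 24) * (G * D / (c * s)) := by field_simp; norm_num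
    _ ≤ (1 + 24) * (G * D / (c * s)) := by gcongr
    _ = 25 * G * D / (c * s) := by ring

end StepSize

section SGD

open Real

variable {Ω : Type*} {m0 : MeasurableSpace Ω} {μ : Measure Ω} {ℱ : Filtration ℕ m0} {f : ℝ → ℝ}
  {A B G η k lo hi : ℝ} {x g : ℕ → Ω → ℝ} {T : ℕ}

namespace IsProjectedSGD

lemma mem_Icc (h : IsProjectedSGD μ ℱ f A B G η x g) (t : ℕ) (ω : Ω) : x t ω ∈ Icc A B := by
  cases t with
  | zero => exact h.zero_mem_Icc ω
  | succ t =>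
    rw [h.step]
    exact projInterval_mem_Icc ((h.zero_mem_Icc ω).1.trans (h.zero_mem_Icc ω).2) _

lemma measurable (h : IsProjectedSGD μ ℱ f A B G η x g) (t : ℕ) : Measurable[ℱ t] (x t) := by
  induction t with
  | zero => exact h.measurable_zero
  | succ t ih =>
    have hx : Measurable[ℱ (t + 1)] (x t) := ih.mono (ℱ.mono t.le_succ) le_rfl
    rw [funext (h.step t)]
    exact (continuous_projInterval A B).measurable.comp
      (hx.sub ((h.measurable_gradient t).const_mul η))

lemma measurable_nearMinExcess (h : IsProjectedSGD μ ℱ f A B G η x g) (k : ℝ) (t : ℕ) :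
    Measurable[ℱ t] fun ω => nearMinExcess f (Icc A B) k (x t ω) :=
  (continuous_excess _ _).measurable.comp (h.measurable t)

lemma abs_nearMinExcess_succ_le (h : IsProjectedSGD μ ℱ f A B G η x g) (hk : 0 < k) (t : ℕ)
    (ω : Ω) : |nearMinExcess f (Icc A B) k (x (t + 1) ω)| ≤
      |nearMinExcess f (Icc A B) k (x t ω) - η * g t ω| := by
  obtain ⟨hpq, hsub⟩ := nearMinimizers_span_subset (f := f)
    ((h.zero_mem_Icc ω).1.trans (h.zero_mem_Icc ω).2) hk
  rw [h.step]
  exact abs_excess_projInterval_sub_le hpq hsub _ _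

lemma integral_abs_nearMinExcess_le [IsProbabilityMeasure μ]
    (h : IsProjectedSGD μ ℱ f A B G η x g) (hη : 0 < η) (hk : 0 < k) (hlo : 0 < lo) (hloG : lo ≤ G)
    (hT : (B - A) ^ 2 ≤ 2 * T * (η * G) ^ 2)
    (hslope : ∀ t, ∀ᵐ ω ∂μ, x t ω ∉ nearMinimizers f (Icc A B) k → lo ≤ |(μ[g t | ℱ t]) ω|) :
    ∫ ω, |nearMinExcess f (Icc A B) k (x T ω)| ∂μ ≤ 6 * η * G ^ 2 / lo := by
  refine integral_abs_le_of_drift (h.measurable_nearMinExcess k)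
    (fun t => ae_of_all _ fun ω => abs_nearMinExcess_le (h.mem_Icc t ω) hk)
    (fun t => ((h.measurable_gradient t).mono (ℱ.le _) le_rfl).aemeasurable) h.abs_gradient_le hη
    (fun t => ae_of_all _ (h.abs_nearMinExcess_succ_le hk t)) hlo hloG (fun t => ?_) hT
  filter_upwards [h.isSubgradientOn t, hslope t] with ω hsubgrad hslopeω
  exact hsubgrad.mul_abs_nearMinExcess_le (Metric.isBounded_Icc A B) (h.mem_Icc t ω) hk hslopeω

lemma aemeasurable_comp (h : IsProjectedSGD μ ℱ f A B G η x g) (t : ℕ) :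
    AEMeasurable (fun ω => f (x t ω)) μ :=
  aemeasurable_comp_of_isSubgradientOn ((h.measurable t).mono (ℱ.le t) le_rfl) (h.mem_Icc t)
    ((h.isSubgradientOn t).mono fun _ hω => ⟨_, hω⟩)

lemma integrable_and_integral_sub_sInf_le [IsProbabilityMeasure μ]
    (h : IsProjectedSGD μ ℱ f A B G η x g) (hη : 0 < η) (hk : 0 < k) (hlo : 0 < lo)
    (hloG : lo ≤ G) (hhi : 0 ≤ hi) (hT : (B - A) ^ 2 ≤ 2 * T * (η * G) ^ 2)
    (hslope : ∀ t, ∀ᵐ ω ∂μ, x t ω ∉ nearMinimizers f (Icc A B) k →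
      |(μ[g t | ℱ t]) ω| ∈ Icc lo hi) :
    Integrable (fun ω => f (x T ω) - sInf (f '' Icc A B)) μ ∧
      ∫ ω, (f (x T ω) - sInf (f '' Icc A B)) ∂μ ≤ k + hi * (6 * η * G ^ 2 / lo) := by
  have hR : Integrable (fun ω => |nearMinExcess f (Icc A B) k (x T ω)|) μ :=
    .abs <| .of_bound
      ((h.measurable_nearMinExcess k T).mono (ℱ.le T) le_rfl).aestronglyMeasurable (B - A)
      (ae_of_all _ fun ω => abs_nearMinExcess_le (h.mem_Icc T ω) hk)
  have hmajorant := (integrable_const k).add (hR.const_mul hi)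
  have hgap_le : ∀ᵐ ω ∂μ, f (x T ω) - sInf (f '' Icc A B) ≤
      k + hi * |nearMinExcess f (Icc A B) k (x T ω)| := by
    filter_upwards [h.isSubgradientOn T, hslope T] with ω hsubgrad hslopeω
    exact hsubgrad.sub_sInf_le (Metric.isBounded_Icc A B) ⟨_, h.mem_Icc T ω⟩ hk
      fun hmem => (hslopeω hmem).2
  have hgap : Integrable (fun ω => f (x T ω) - sInf (f '' Icc A B)) μ := by
    refine hmajorant.mono' ((h.aemeasurable_comp T).sub_const _).aestronglyMeasurable ?_
    filter_upwards [h.isSubgradientOn T, hgap_le] with ω hsubgrad hle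
    have hbdd := hsubgrad.bddBelow_image (Metric.isBounded_Icc A B)
    rwa [norm_of_nonneg (sub_nonneg.2 (csInf_le hbdd (mem_image_of_mem f (h.mem_Icc T ω))))]
  refine ⟨hgap, (integral_mono_ae hgap hmajorant hgap_le).trans ?_⟩
  rw [integral_add' (integrable_const k) (hR.const_mul hi), integral_const, integral_const_mul,
    probReal_univ, one_smul]
  gcongr
  exact h.integral_abs_nearMinExcess_le hη hk hlo hloG hT
    fun t => (hslope t).mono fun _ hω hmem => (hω hmem).1

end IsProjectedSGD

theorem stmt15_general [IsProbabilityMeasure μ] {c ε : ℝ} (hAB : A < B) (hG : 0 < G)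
    (hT : 1 ≤ T) (hε : 0 < ε) (hε1 : ε ≤ 1) (hc : 0 < c) (hc1 : c ≤ 1)
    (h : IsProjectedSGD μ ℱ f A B G (4 * (B - A) / (G * √T)) x g)
    (hslope : ∀ t, ∀ᵐ ω ∂μ, x t ω ∉ nearMinimizers f (Icc A B) (G * (B - A) / √T) →
      |(μ[g t | ℱ t]) ω| ∈ Icc (c * ε * G) (ε * G)) :
    Integrable (fun ω => f (x T ω) - sInf (f '' Icc A B)) μ ∧
      ∫ ω, (f (x T ω) - sInf (f '' Icc A B)) ∂μ ≤ 25 * G * (B - A) / (c * √T) := by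
  have hD : 0 < B - A := sub_pos.2 hAB
  have hs : 0 < √(T : ℝ) := sqrt_pos.2 (Nat.cast_pos.2 hT)
  have hlo : c * ε * G ≤ G := mul_le_of_le_one_left hG.le (mul_le_one₀ hc1 hε.le hε1)
  have hsize : (B - A) ^ 2 ≤ 2 * T * (4 * (B - A) / (G * √T) * G) ^ 2 := by
    simpa only [sq_sqrt T.cast_nonneg] using sq_le_two_mul_sq_mul_sq hG hs
  obtain ⟨hint, hle⟩ := h.integrable_and_integral_sub_sInf_le (by positivity) (by positivity)
    (by positivity) hlo (by positivity) hsize hslope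
  exact ⟨hint, hle.trans (level_add_drift_le hD hG hs hε hc hc1)⟩

end SGD

theorem stmt15 :
    ∃ C : ℝ, 0 < C ∧
      ∀ (Ω : Type) (m0 : MeasurableSpace Ω) (μ : Measure Ω),
        IsProbabilityMeasure μ →
        ∀ ℱ : Filtration ℕ m0,
        ∀ A B : ℝ, A < B →                       -- X = [A,B], diameter D = B - A > 0
        ∀ G : ℝ, 0 < G →
        ∀ T : ℕ, 1 ≤ T →
        ∀ f : ℝ → ℝ, ConvexOn ℝ (Set.Icc A B) f →
          (∀ u ∈ Set.Icc A B, ∀ v ∈ Set.Icc A B, |f u - f v| ≤ G * |u - v|) →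
        ∀ ε c : ℝ, 0 < ε → ε ≤ 1 → 0 < c → c ≤ 1 →
        ∀ (x g : ℕ → Ω → ℝ) (x₀ : ℝ), x₀ ∈ Set.Icc A B →
          -- SGD process with fixed step size η = 4D/(G√T) started from x₀
          (∀ ω, x 0 ω = x₀) →
          (∀ t, Measurable[ℱ (t + 1)] (g t)) →
          (∀ t, ∀ᵐ ω ∂μ, |g t ω| ≤ G) →
          (∀ t ω, x (t + 1) ω =
            projInterval A B (x t ω - (4 * (B - A) / (G * Real.sqrt T)) * g t ω)) →
          (∀ t, ∀ᵐ ω ∂μ, ∀ y ∈ Set.Icc A B,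
            f y - f (x t ω) ≥ (μ[g t | ℱ t]) ω * (y - x t ω)) →
          -- nearly linear condition: whenever x_t ∉ S,  |E[ĝ_t | F_t]| ∈ [cεG, εG]
          (∀ t, ∀ᵐ ω ∂μ,
            ¬ (x t ω ∈ Set.Icc A B ∧
                f (x t ω) - sInf (f '' Set.Icc A B) ≤ G * (B - A) / Real.sqrt T) →
              |(μ[g t | ℱ t]) ω| ∈ Set.Icc (c * ε * G) (ε * G)) →
          ∫ ω, (f (x T ω) - sInf (f '' Set.Icc A B)) ∂μ ≤
            C * G * (B - A) / (c * Real.sqrt T) := by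
  refine ⟨25, by norm_num, ?_⟩
  intro Ω m0 μ _ ℱ A B hAB G hG T hT f _ _ ε c hε hε1 hc hc1 x g x₀ hx₀ h0 hg hgG hstep hsub hlin
  exact (stmt15_general hAB hG hT hε hε1 hc hc1
    ⟨funext h0 ▸ measurable_const, fun ω => h0 ω ▸ hx₀, hg, hgG, hstep, hsub⟩ hlin).2
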